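/- Let n be a natural number with n ≥ 3. Then (n - 1/2)(n - 1) ≤ liminf_{λ→(-1/2)⁺} 2√(2λ+1)·c_n(λ) and limsup_{λ→(-1/2)⁺} 2√(2λ+1)·c_n(λ) ≤ (n + 3/2)². -/

import Mathlib

open Polynomial Filter

/-- The weighted `L_2` norm with the Gegenbauer weight `w_lam(t) = (1-t^2)^(lam-1/2)`. -/
noncomputable def gegNorm (lam : ℝ) (f : ℝ → ℝ) : ℝ :=
  (∫ x in (-1:ℝ)..1, (f x) ^ 2 * (1 - x ^ 2) ^ (lam - 1/2)) ^ ((1:ℝ)/2)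

/-- The best Markov constant `c_n(lam)` in `‖p'‖ ≤ c_n(lam) ‖p‖` for polynomials of degree ≤ n. -/
noncomputable def markovConst (lam : ℝ) (n : ℕ) : ℝ :=
  sSup { r : ℝ | ∃ p : Polynomial ℝ, p ≠ 0 ∧ p.natDegree ≤ n ∧
    r = gegNorm lam (fun x => (Polynomial.derivative p).eval x) /
        gegNorm lam (fun x => p.eval x) }

open MeasureTheory
open scoped Topology

/-! Put `s = λ + 1/2`. As `s → 0⁺` the measures `s (1 - x²) ^ (s - 1) dx` on `[-1, 1]` converge to
half the sum of the unit point masses at `±1`. Hence the squared quotient `8 s ‖p'‖² / ‖p‖²` tends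
to `0` unless `p` vanishes at `±1`, and for `p = (1 - x²) q` it tends to
`16 (q(1)² + q(-1)²) / ∫ (1 - x²) q²`.
Two integrations by parts show that `P_n''` and `P_{n-1}''` represent `2 (q(1) ± q(-1))` for
the weight `1 - x²` on polynomials `q` of degree at most `n - 2`. By Cauchy–Schwarz the limit
quotient is at most `8 P_n''(1) = (n - 1) n (n + 1) (n + 2)`, with equality for `q = P_n''`.
Compactness of the unit sphere of the coefficient space makes the upper bound uniform in `p`. -/

/-! ### Integration against the Gegenbauer weight -/

/-- The integral of `f` over `[-1, 1]` against the Gegenbauer weight `w_lam` with `lam = s - 1/2`,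
so that `lam → -1/2` from above becomes `s → 0⁺` and integrability of the weight becomes `0 < s`. -/
noncomputable def gegIntegral (s : ℝ) (f : ℝ → ℝ) : ℝ :=
  ∫ x in (-1 : ℝ)..1, f x * (1 - x ^ 2) ^ (s - 1)

theorem one_sub_sq_nonneg {x : ℝ} (hx : x ∈ Set.Icc (-1) 1) : 0 ≤ 1 - x ^ 2 :=
  sub_nonneg.2 ((sq_le_one_iff_abs_le_one x).2 (abs_le.2 hx))

theorem one_sub_sq_pos {x : ℝ} (hx : x ∈ Set.Ioo (-1) 1) : 0 < 1 - x ^ 2 :=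
  sub_pos.2 ((sq_lt_one_iff_abs_lt_one x).2 (abs_lt.2 hx))

theorem intervalIntegrable_one_sub_sq_rpow {r : ℝ} (hr : -1 < r) :
    IntervalIntegrable (fun x : ℝ ↦ (1 - x ^ 2) ^ r) volume (-1) 1 := by
  have hfactor : ∀ x ∈ Set.Icc (-1 : ℝ) 1, (1 - x) ^ r * (1 + x) ^ r = (1 - x ^ 2) ^ r := by
    intro x hx
    rw [← Real.mul_rpow (by linarith [hx.2]) (by linarith [hx.1])]
    congr 1
    ring
  have hcont : ContinuousOn (fun x : ℝ ↦ (1 + x) ^ r) (Set.uIcc 0 1) := by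
    refine ContinuousOn.rpow_const (by fun_prop) fun x hx ↦ Or.inl ?_
    rw [Set.uIcc_of_le zero_le_one] at hx
    linarith [hx.1]
  have hsing : IntervalIntegrable (fun x : ℝ ↦ (1 - x) ^ r) volume 0 1 := by
    simpa using (intervalIntegral.intervalIntegrable_rpow' (a := 1) (b := 0) hr).comp_sub_left 1
  have hright : IntervalIntegrable (fun x : ℝ ↦ (1 - x ^ 2) ^ r) volume 0 1 := by
    refine (hsing.mul_continuousOn hcont).congr fun x hx ↦ ?_
    rw [Set.uIoc_of_le zero_le_one] at hx
    exact hfactor x ⟨by linarith [hx.1], hx.2⟩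
  have hleft : IntervalIntegrable (fun x : ℝ ↦ (1 - x ^ 2) ^ r) volume (-1) 0 := by
    simpa using ((IntervalIntegrable.iff_comp_neg).1 hright).symm
  exact hleft.trans hright

theorem intervalIntegrable_mul_one_sub_sq_rpow {r : ℝ} (hr : -1 < r) {f : ℝ → ℝ}
    (hf : Continuous f) :
    IntervalIntegrable (fun x : ℝ ↦ f x * (1 - x ^ 2) ^ r) volume (-1) 1 :=
  (intervalIntegrable_one_sub_sq_rpow hr).continuousOn_mul hf.continuousOn

theorem gegIntegral_one (f : ℝ → ℝ) : gegIntegral 1 f = ∫ x in (-1 : ℝ)..1, f x := by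
  simp [gegIntegral]

theorem gegIntegral_two (f : ℝ → ℝ) :
    gegIntegral 2 f = ∫ x in (-1 : ℝ)..1, (1 - x ^ 2) * f x := by
  norm_num [gegIntegral, mul_comm]

theorem gegIntegral_const_mul (s c : ℝ) (f : ℝ → ℝ) :
    gegIntegral s (fun x ↦ c * f x) = c * gegIntegral s f := by
  simp only [gegIntegral, mul_assoc, intervalIntegral.integral_const_mul]

theorem gegIntegral_add {s : ℝ} (hs : 0 < s) {f g : ℝ → ℝ} (hf : Continuous f)
    (hg : Continuous g) :
    gegIntegral s (fun x ↦ f x + g x) = gegIntegral s f + gegIntegral s g := by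
  simp only [gegIntegral, add_mul]
  exact intervalIntegral.integral_add
    (intervalIntegrable_mul_one_sub_sq_rpow (by linarith) hf)
    (intervalIntegrable_mul_one_sub_sq_rpow (by linarith) hg)

theorem gegIntegral_nonneg (s : ℝ) {f : ℝ → ℝ} (hf : ∀ x, 0 ≤ f x) : 0 ≤ gegIntegral s f :=
  intervalIntegral.integral_nonneg (by norm_num) fun x hx ↦
    mul_nonneg (hf x) (Real.rpow_nonneg (one_sub_sq_nonneg hx) _)

theorem gegIntegral_anti {s t : ℝ} (hs : 0 < s) (hst : s ≤ t) {f : ℝ → ℝ} (hf : Continuous f)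
    (hf0 : ∀ x, 0 ≤ f x) : gegIntegral t f ≤ gegIntegral s f := by
  refine intervalIntegral.integral_mono_on_of_le_Ioo (by norm_num)
    (intervalIntegrable_mul_one_sub_sq_rpow (by linarith) hf)
    (intervalIntegrable_mul_one_sub_sq_rpow (by linarith) hf) fun x hx ↦ ?_
  gcongr ?_ * ?_
  · exact hf0 x
  · exact Real.rpow_le_rpow_of_exponent_ge (one_sub_sq_pos hx) (by linarith [sq_nonneg x])
      (by linarith)

theorem gegIntegral_one_sub_sq_mul (s : ℝ) (f : ℝ → ℝ) :
    gegIntegral s (fun x ↦ (1 - x ^ 2) * f x) = gegIntegral (s + 1) f := by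
  refine intervalIntegral.integral_congr_Ioo_of_le (by norm_num) fun x hx ↦ ?_
  have hpos := one_sub_sq_pos hx
  simp only [add_sub_right_comm s 1 1, Real.rpow_add_one hpos.ne']
  ring

theorem gegIntegral_sq_eval_pos {s : ℝ} (hs : 0 < s) {p : ℝ[X]} (hp : p ≠ 0) :
    0 < gegIntegral s fun x ↦ p.eval x ^ 2 := by
  -- Raising the exponent by one makes the integrand continuous up to the endpoints.
  refine lt_of_lt_of_le ?_ (gegIntegral_anti hs (le_add_of_nonneg_right zero_le_one)
    (by fun_prop) fun x ↦ sq_nonneg (p.eval x))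
  obtain ⟨c, hc, hpc⟩ : ∃ c ∈ Set.Ioo (-1 : ℝ) 1, ¬ p.IsRoot c := by
    by_contra! h
    exact hp (eq_zero_of_infinite_isRoot p ((Set.Ioo_infinite (by norm_num)).mono h))
  have hpc : p.eval c ≠ 0 := hpc
  have hcont : Continuous fun x : ℝ ↦ (1 - x ^ 2) ^ (s + 1 - 1) :=
    Continuous.rpow_const (by fun_prop) fun _ ↦ Or.inr (by linarith)
  refine intervalIntegral.integral_pos (by norm_num) (by fun_prop) (fun x hx ↦ ?_)
    ⟨c, Set.Ioo_subset_Icc_self hc, ?_⟩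
  · exact mul_nonneg (sq_nonneg _)
      (Real.rpow_nonneg (one_sub_sq_nonneg (Set.Ioc_subset_Icc_self hx)) _)
  · have := Real.rpow_pos_of_pos (one_sub_sq_pos hc) (s + 1 - 1)
    positivity

theorem sq_gegIntegral_mul_le {s : ℝ} (hs : 0 < s) {f g : ℝ → ℝ} (hf : Continuous f)
    (hg : Continuous g) :
    gegIntegral s (fun x ↦ f x * g x) ^ 2 ≤
      gegIntegral s (fun x ↦ f x ^ 2) * gegIntegral s (fun x ↦ g x ^ 2) := by
  have hquad : ∀ c : ℝ, 0 ≤ gegIntegral s (fun x ↦ g x ^ 2) * (c * c) +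
      2 * gegIntegral s (fun x ↦ f x * g x) * c + gegIntegral s (fun x ↦ f x ^ 2) := by
    intro c
    calc 0 ≤ gegIntegral s (fun x ↦ (f x + c * g x) ^ 2) :=
          gegIntegral_nonneg s fun x ↦ sq_nonneg _
      _ = gegIntegral s (fun x ↦ f x ^ 2 + (2 * c * (f x * g x) + c ^ 2 * g x ^ 2)) := by
          congr 1 with x
          ring
      _ = _ := by
          rw [gegIntegral_add hs (by fun_prop) (by fun_prop),
            gegIntegral_add hs (by fun_prop) (by fun_prop), gegIntegral_const_mul,
            gegIntegral_const_mul]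
          ring
  have hdiscrim := discrim_le_zero hquad
  rw [discrim] at hdiscrim
  linarith

theorem hasDerivAt_mul_mul_one_sub_sq_rpow {f : ℝ → ℝ} {f' x : ℝ} (s : ℝ) (hf : HasDerivAt f f' x)
    (hx : x ∈ Set.Ioo (-1) 1) :
    HasDerivAt (fun x ↦ x * f x * (1 - x ^ 2) ^ s)
      ((f x + x * f') * (1 - x ^ 2) ^ s + 2 * s * (f x * (1 - x ^ 2) ^ s) -
        2 * s * (f x * (1 - x ^ 2) ^ (s - 1))) x := by
  have hpos := one_sub_sq_pos hx
  have hbase : HasDerivAt (fun x : ℝ ↦ 1 - x ^ 2) (-(2 * x)) x := by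
    simpa using (hasDerivAt_pow 2 x).const_sub 1
  refine (((hasDerivAt_id x).fun_mul hf).fun_mul
    (hbase.rpow_const (p := s) (Or.inl hpos.ne'))).congr_deriv ?_
  have hsplit : (1 - x ^ 2) ^ s = (1 - x ^ 2) ^ (s - 1) * (1 - x ^ 2) := by
    rw [← Real.rpow_add_one hpos.ne', sub_add_cancel]
  simp only [hsplit, id]
  ring

theorem two_mul_gegIntegral {s : ℝ} (hs : 0 < s) {f f' : ℝ → ℝ}
    (hf : ∀ x, HasDerivAt f (f' x) x) (hf' : Continuous f') :
    2 * s * gegIntegral s f =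
      gegIntegral (s + 1) (fun x ↦ f x + x * f' x) + 2 * s * gegIntegral (s + 1) f := by
  have hcf : Continuous f := continuous_iff_continuousAt.2 fun x ↦ (hf x).continuousAt
  have hcs : Continuous fun x : ℝ ↦ (1 - x ^ 2) ^ s :=
    Continuous.rpow_const (by fun_prop) fun _ ↦ Or.inr hs.le
  have hderivInt := intervalIntegrable_mul_one_sub_sq_rpow (r := s) (f := fun x ↦ f x + x * f' x)
    (by linarith) (by fun_prop)
  have hregInt := (intervalIntegrable_mul_one_sub_sq_rpow (r := s) (by linarith) hcf).const_mul
    (2 * s)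
  have hsingInt := (intervalIntegrable_mul_one_sub_sq_rpow (r := s - 1) (by linarith) hcf).const_mul
    (2 * s)
  have hftc := intervalIntegral.integral_eq_sub_of_hasDerivAt_of_le (by norm_num)
    ((continuous_id.fun_mul hcf).fun_mul hcs).continuousOn
    (fun x hx ↦ hasDerivAt_mul_mul_one_sub_sq_rpow s (hf x) hx)
    ((hderivInt.add hregInt).sub hsingInt)
  rw [intervalIntegral.integral_sub (hderivInt.add hregInt) hsingInt,
    intervalIntegral.integral_add hderivInt hregInt,
    intervalIntegral.integral_const_mul, intervalIntegral.integral_const_mul] at hftc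
  norm_num [Real.zero_rpow hs.ne'] at hftc
  simp only [gegIntegral, add_sub_cancel_right]
  linarith

theorem continuousAt_gegIntegral {f : ℝ → ℝ} (hf : Continuous f) {s₀ : ℝ} (hs₀ : 0 < s₀) :
    ContinuousAt (fun s ↦ gegIntegral s f) s₀ := by
  refine intervalIntegral.tendsto_integral_filter_of_dominated_convergence
    (fun x ↦ |f x| * (1 - x ^ 2) ^ (s₀ / 2 - 1)) ?_ ?_
    (intervalIntegrable_mul_one_sub_sq_rpow (by linarith) hf.abs) ?_
  · filter_upwards [lt_mem_nhds hs₀] with s hs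
    exact (intervalIntegrable_mul_one_sub_sq_rpow (by linarith) hf).def'.aestronglyMeasurable
  · filter_upwards [lt_mem_nhds (half_lt_self hs₀)] with s hs
    filter_upwards [Measure.ae_ne volume (1 : ℝ)] with x hx1 hx
    rw [Set.uIoc_of_le (by norm_num)] at hx
    have hpos := one_sub_sq_pos ⟨hx.1, hx.2.lt_of_ne hx1⟩
    rw [norm_mul, Real.norm_eq_abs, Real.norm_of_nonneg (Real.rpow_nonneg hpos.le _)]
    gcongr ?_ * ?_
    exact Real.rpow_le_rpow_of_exponent_ge hpos (by linarith [sq_nonneg x]) (by linarith)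
  · filter_upwards [Measure.ae_ne volume (1 : ℝ)] with x hx1 hx
    rw [Set.uIoc_of_le (by norm_num)] at hx
    have hpos := one_sub_sq_pos ⟨hx.1, hx.2.lt_of_ne hx1⟩
    exact tendsto_const_nhds.mul
      ((Real.continuousAt_const_rpow hpos.ne').tendsto.comp (tendsto_id.sub_const 1))

theorem tendsto_gegIntegral_add {f : ℝ → ℝ} (hf : Continuous f) {t : ℝ} (ht : 0 < t) :
    Tendsto (fun s ↦ gegIntegral (s + t) f) (𝓝[>] 0) (𝓝 (gegIntegral t f)) := by
  have hshift : Tendsto (fun s : ℝ ↦ s + t) (𝓝 0) (𝓝 t) := by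
    simpa using (continuous_add_const t).tendsto 0
  exact ((continuousAt_gegIntegral hf ht).tendsto.comp hshift).mono_left nhdsWithin_le_nhds

theorem tendsto_mul_gegIntegral {f f' : ℝ → ℝ} (hf : ∀ x, HasDerivAt f (f' x) x)
    (hf' : Continuous f') :
    Tendsto (fun s ↦ s * gegIntegral s f) (𝓝[>] 0) (𝓝 ((f 1 + f (-1)) / 2)) := by
  have hcf : Continuous f := continuous_iff_continuousAt.2 fun x ↦ (hf x).continuousAt
  have hid : Tendsto (fun s : ℝ ↦ s) (𝓝[>] 0) (𝓝 0) := nhdsWithin_le_nhds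
  have hftc : gegIntegral 1 (fun x ↦ f x + x * f' x) = f 1 + f (-1) := by
    rw [gegIntegral_one, intervalIntegral.integral_eq_sub_of_hasDerivAt
      (fun x _ ↦ by simpa using (hasDerivAt_id x).fun_mul (hf x))
      (Continuous.intervalIntegrable (by fun_prop) _ _)]
    simp
  have hlim := ((tendsto_gegIntegral_add (f := fun x ↦ f x + x * f' x) (by fun_prop) one_pos).add
    ((hid.const_mul 2).mul (tendsto_gegIntegral_add hcf one_pos))).div_const 2
  simp only [mul_zero, zero_mul, add_zero, hftc] at hlim
  refine hlim.congr' ?_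
  filter_upwards [self_mem_nhdsWithin] with s hs
  rw [← two_mul_gegIntegral hs hf hf']
  ring

theorem tendsto_mul_gegIntegral_eval (f : ℝ[X]) :
    Tendsto (fun s ↦ s * gegIntegral s fun x ↦ f.eval x) (𝓝[>] 0)
      (𝓝 ((f.eval 1 + f.eval (-1)) / 2)) :=
  tendsto_mul_gegIntegral f.hasDerivAt (derivative f).continuous

theorem tendsto_gegIntegral_sq_one_sub_sq_mul (q : ℝ[X]) :
    Tendsto (fun s ↦ gegIntegral s fun x ↦ ((1 - X ^ 2) * q).eval x ^ 2) (𝓝[>] 0)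
      (𝓝 (gegIntegral 2 fun x ↦ q.eval x ^ 2)) := by
  have hshift : ∀ s, gegIntegral s (fun x ↦ ((1 - X ^ 2) * q).eval x ^ 2) =
      gegIntegral (s + 2) fun x ↦ q.eval x ^ 2 := fun s ↦ by
    rw [show s + 2 = s + 1 + 1 by ring, ← gegIntegral_one_sub_sq_mul, ← gegIntegral_one_sub_sq_mul]
    congr 1 with x
    simp
    ring
  simp only [hshift]
  exact tendsto_gegIntegral_add (by fun_prop) two_pos

/-! ### Legendre polynomials and endpoint values -/

theorem integral_eval_mul_eval_derivative (f g : ℝ[X]) (a b : ℝ) :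
    ∫ x in a..b, f.eval x * (derivative g).eval x =
      f.eval b * g.eval b - f.eval a * g.eval a -
        ∫ x in a..b, (derivative f).eval x * g.eval x :=
  intervalIntegral.integral_mul_deriv_eq_deriv_mul
    (fun x _ ↦ f.hasDerivAt x) (fun x _ ↦ g.hasDerivAt x)
    ((derivative f).continuous.intervalIntegrable _ _)
    ((derivative g).continuous.intervalIntegrable _ _)

theorem integral_eval_mul_eval_iterate_derivative {a b : ℝ} (g : ℝ[X]) (k : ℕ)
    (ha : ∀ j < k, (derivative^[j] g).eval a = 0) (hb : ∀ j < k, (derivative^[j] g).eval b = 0)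
    (f : ℝ[X]) :
    ∫ x in a..b, f.eval x * (derivative^[k] g).eval x =
      (-1) ^ k * ∫ x in a..b, (derivative^[k] f).eval x * g.eval x := by
  induction k generalizing f with
  | zero => simp
  | succ k ih =>
    rw [Function.iterate_succ_apply' derivative k g, integral_eval_mul_eval_derivative,
      ha k (by omega), hb k (by omega),
      ih (fun j hj ↦ ha j (by omega)) (fun j hj ↦ hb j (by omega)) (derivative f),
      Function.iterate_succ_apply]
    ring

theorem eval_iterate_derivative_eq_zero_of_pow_dvd {R : Type*} [CommRing R] {p : R[X]} {c : R}
    {n j : ℕ} (hdvd : (X - C c) ^ n ∣ p) (hj : j < n) : (derivative^[j] p).eval c = 0 :=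
  dvd_iff_isRoot.1 <| (dvd_pow_self _ (Nat.sub_ne_zero_of_lt hj)).trans
    (pow_sub_dvd_iterate_derivative_of_pow_dvd j hdvd)

theorem integral_eval_mul_shiftedLegendre_eq_zero {f : ℝ[X]} {n : ℕ} (hf : f.natDegree < n) :
    ∫ x in (0 : ℝ)..1, f.eval x * ((shiftedLegendre n).map (Int.castRingHom ℝ)).eval x = 0 := by
  have hrodrigues : C (n.factorial : ℝ) * (shiftedLegendre n).map (Int.castRingHom ℝ) =
      derivative^[n] (X ^ n * (1 - X) ^ n) := by
    simpa [← Polynomial.iterate_derivative_map] using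
      congrArg (Polynomial.map (Int.castRingHom ℝ)) (factorial_mul_shiftedLegendre_eq n)
  have hdvd0 : (X - C 0 : ℝ[X]) ^ n ∣ X ^ n * (1 - X) ^ n := by simp
  have hdvd1 : (X - C 1 : ℝ[X]) ^ n ∣ X ^ n * (1 - X) ^ n :=
    (pow_dvd_pow_of_dvd ((dvd_sub_comm).1 (by simp)) n).mul_left _
  have hparts := integral_eval_mul_eval_iterate_derivative _ n
    (fun j ↦ eval_iterate_derivative_eq_zero_of_pow_dvd hdvd0)
    (fun j ↦ eval_iterate_derivative_eq_zero_of_pow_dvd hdvd1) f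
  rw [← hrodrigues, iterate_derivative_eq_zero hf] at hparts
  simp only [eval_mul, eval_C, eval_zero, zero_mul, intervalIntegral.integral_zero,
    mul_zero, mul_left_comm _ (n.factorial : ℝ), intervalIntegral.integral_const_mul] at hparts
  exact (mul_eq_zero.mp hparts).resolve_left (by positivity)

/-- The Legendre polynomial `P_n`, orthogonal on `[-1, 1]` and normalized by `P_n(1) = 1`. The
substitution `x ↦ (1 - x) / 2` reverses the interval since `shiftedLegendre n` is `1` at `0`. -/
noncomputable def legendre (n : ℕ) : ℝ[X] :=
  ((shiftedLegendre n).map (Int.castRingHom ℝ)).comp (C (1 / 2) * (1 - X))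

theorem natDegree_legendre_le (n : ℕ) : (legendre n).natDegree ≤ n := by
  have hlin : (C (1 / 2) * (1 - X) : ℝ[X]).natDegree ≤ 1 := by compute_degree
  have hdeg : ((shiftedLegendre n).map (Int.castRingHom ℝ)).natDegree ≤ n :=
    natDegree_map_le.trans (natDegree_shiftedLegendre n).le
  calc (legendre n).natDegree ≤ _ := natDegree_comp_le
    _ ≤ n * 1 := Nat.mul_le_mul hdeg hlin
    _ = n := mul_one n

theorem legendre_comp_neg_X (n : ℕ) : (legendre n).comp (-X) = C ((-1) ^ n) * legendre n := by
  have hsymm := congrArg (fun p ↦ (Polynomial.map (Int.castRingHom ℝ) p).comp (C (1 / 2) * (1 + X)))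
    (neg_one_pow_mul_shiftedLegendre_comp_one_sub_X_eq n)
  have hlin : (1 - C (1 / 2) * (1 + X) : ℝ[X]) = C (1 / 2) * (1 - X) := by
    have hhalf : (1 : ℝ[X]) = C (1 / 2) * 2 := by
      rw [show (2 : ℝ[X]) = C 2 from rfl, ← C_mul]
      norm_num
    linear_combination hhalf
  simp only [Polynomial.map_mul, Polynomial.map_pow, Polynomial.map_neg, Polynomial.map_one,
    Polynomial.map_comp, Polynomial.map_sub, map_X, mul_comp, comp_assoc, sub_comp, one_comp,
    X_comp, pow_comp, neg_comp, hlin] at hsymm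
  simpa [legendre, comp_assoc] using hsymm.symm

theorem eval_one_legendre (n : ℕ) : (legendre n).eval 1 = 1 := by
  simp [legendre, eval_comp, ← coeff_zero_eq_eval_zero, coeff_shiftedLegendre]

theorem eval_neg_one_legendre (n : ℕ) : (legendre n).eval (-1) = (-1) ^ n := by
  simpa [eval_comp, eval_one_legendre] using congrArg (eval 1) (legendre_comp_neg_X n)

/-- `endpointConst n` is `8 * P_n''(1)`; its square root is the limit in the theorem. -/
def endpointConst (n : ℕ) : ℝ := (n - 1) * n * (n + 1) * (n + 2)

theorem eval_one_derivative_derivative_legendre (n : ℕ) :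
    (derivative (derivative (legendre n))).eval 1 = endpointConst n / 8 := by
  have hchoose : ((n + 2).choose n : ℝ) = (n + 2) * (n + 1) / 2 := by
    rw [Nat.choose_symm_add, Nat.cast_choose_two]
    push_cast
    ring
  simp [legendre, derivative_comp, eval_comp, ← coeff_zero_eq_eval_zero, coeff_derivative,
    coeff_shiftedLegendre, hchoose, Nat.cast_choose_two, endpointConst]
  ring

theorem eval_neg_one_derivative_derivative_legendre (n : ℕ) :
    (derivative (derivative (legendre n))).eval (-1) = (-1) ^ n * (endpointConst n / 8) := by
  have hparity := congrArg (fun p ↦ (derivative (derivative p)).eval 1) (legendre_comp_neg_X n)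
  simpa only [derivative_comp, derivative_neg, derivative_X, derivative_mul, derivative_C, mul_comp,
    neg_comp, one_comp, derivative_one, eval_add, eval_mul, eval_comp, eval_neg, eval_one, eval_X,
    eval_C, eval_zero, zero_mul, zero_add, neg_mul, one_mul, neg_neg, derivative_zero, neg_zero,
    eval_one_derivative_derivative_legendre] using hparity

theorem integral_eval_mul_legendre_eq_zero {f : ℝ[X]} {n : ℕ} (hf : f.natDegree < n) :
    ∫ x in (-1 : ℝ)..1, f.eval x * (legendre n).eval x = 0 := by
  have hdeg : (f.comp (1 - C 2 * X)).natDegree < n := by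
    have hlin : (1 - C 2 * X : ℝ[X]).natDegree ≤ 1 := by compute_degree
    calc (f.comp (1 - C 2 * X)).natDegree ≤ f.natDegree * (1 - C 2 * X : ℝ[X]).natDegree :=
          natDegree_comp_le
      _ ≤ f.natDegree * 1 := Nat.mul_le_mul_left _ hlin
      _ < n := by rwa [mul_one]
  have hsubst := intervalIntegral.integral_comp_sub_mul
    (fun x ↦ f.eval x * (legendre n).eval x) (a := 0) (b := 1) (two_ne_zero' ℝ) 1
  have horth := integral_eval_mul_shiftedLegendre_eq_zero hdeg
  have hinv : ∀ x : ℝ, 1 / 2 * (1 - (1 - 2 * x)) = x := fun x ↦ by ring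
  simp only [legendre, eval_comp, eval_mul, eval_sub, eval_one, eval_C, eval_X, hinv]
    at hsubst horth ⊢
  rw [horth] at hsubst
  norm_num at hsubst
  exact hsubst

theorem gegIntegral_two_mul_derivative_derivative_legendre {q : ℝ[X]} {n : ℕ}
    (hq : q.natDegree < n) :
    gegIntegral 2 (fun x ↦ q.eval x * (derivative (derivative (legendre n))).eval x) =
      2 * (q.eval 1 + (-1) ^ n * q.eval (-1)) := by
  set w : ℝ[X] := (1 - X ^ 2) * q with hw
  have hdeg : (derivative (derivative w)).natDegree < n := by
    have hquad : (1 - X ^ 2 : ℝ[X]).natDegree ≤ 2 := by compute_degree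
    have hwdeg : w.natDegree ≤ _ := natDegree_mul_le
    have hderiv := natDegree_derivative_le w
    have hderiv2 := natDegree_derivative_le (derivative w)
    omega
  have hparts := integral_eval_mul_eval_derivative w (derivative (legendre n)) (-1) 1
  rw [integral_eval_mul_eval_derivative (derivative w) (legendre n),
    integral_eval_mul_legendre_eq_zero hdeg, eval_one_legendre, eval_neg_one_legendre] at hparts
  rw [gegIntegral_two]
  calc _ = ∫ x in (-1 : ℝ)..1, w.eval x * (derivative (derivative (legendre n))).eval x := by
        simp [hw, mul_assoc]
    _ = _ := by
        rw [hparts]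
        simp [hw]
        ring

theorem endpointConst_nonneg (n : ℕ) : 0 ≤ endpointConst n := by
  rcases n.eq_zero_or_pos with rfl | hn
  · simp [endpointConst]
  · have hn1 : (0 : ℝ) ≤ n - 1 := sub_nonneg.2 (Nat.one_le_cast.2 hn)
    rw [endpointConst]
    positivity

theorem endpointConst_pos {n : ℕ} (hn : 2 ≤ n) : 0 < endpointConst n := by
  have hn1 : (0 : ℝ) < n - 1 := sub_pos.2 (Nat.one_lt_cast.2 hn)
  rw [endpointConst]
  positivity

theorem endpointConst_le_succ (n : ℕ) : endpointConst n ≤ endpointConst (n + 1) := by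
  have hdiff : endpointConst (n + 1) - endpointConst n = 4 * (n * (n + 1) * (n + 2)) := by
    simp only [endpointConst, Nat.cast_add, Nat.cast_one]
    ring
  have : (0 : ℝ) ≤ 4 * (n * (n + 1) * (n + 2)) := by positivity
  linarith

theorem derivative_derivative_legendre_ne_zero {n : ℕ} (hn : 2 ≤ n) :
    derivative (derivative (legendre n)) ≠ 0 := fun hzero ↦ by
  have heval := eval_one_derivative_derivative_legendre n
  rw [hzero, eval_zero] at heval
  linarith [endpointConst_pos hn]

theorem natDegree_derivative_derivative_legendre_le (n : ℕ) :
    (derivative (derivative (legendre n))).natDegree ≤ n - 2 :=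
  (natDegree_iterate_derivative (legendre n) 2).trans
    (Nat.sub_le_sub_right (natDegree_legendre_le n) 2)

/-- The polynomial representing `q ↦ 4 (u q(1) + v q(-1))` with respect to the weight `1 - x²` on
polynomials `q` of degree less than `N`. It exists since `P_{N+1}''` and `P_N''` have opposite
parity, so that they represent `2 (q(1) ± q(-1))`. -/
noncomputable def endpointRepresenter (N : ℕ) (u v : ℝ) : ℝ[X] :=
  C (u - (-1) ^ N * v) * derivative (derivative (legendre (N + 1))) +
    C (u + (-1) ^ N * v) * derivative (derivative (legendre N))

theorem natDegree_endpointRepresenter_lt {N : ℕ} (hN : 1 ≤ N) (u v : ℝ) :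
    (endpointRepresenter N u v).natDegree < N := by
  have hsucc := natDegree_derivative_derivative_legendre_le (N + 1)
  have hself := natDegree_derivative_derivative_legendre_le N
  refine (natDegree_add_le_of_degree_le ((natDegree_C_mul_le _ _).trans ?_)
    ((natDegree_C_mul_le _ _).trans ?_)).trans_lt (Nat.sub_one_lt_of_lt hN) <;> omega

theorem gegIntegral_two_mul_endpointRepresenter {N : ℕ} (u v : ℝ) {q : ℝ[X]}
    (hq : q.natDegree < N) :
    gegIntegral 2 (fun x ↦ q.eval x * (endpointRepresenter N u v).eval x) =
      4 * (u * q.eval 1 + v * q.eval (-1)) := by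
  set e : ℝ := (-1) ^ N with he
  have hee : e ^ 2 = 1 := by
    rw [he, pow_right_comm, neg_one_sq, one_pow]
  calc _ = gegIntegral 2 (fun x ↦
          (u - e * v) * (q.eval x * (derivative (derivative (legendre (N + 1)))).eval x) +
            (u + e * v) * (q.eval x * (derivative (derivative (legendre N))).eval x)) := by
        congr 1 with x
        simp only [endpointRepresenter, eval_add, eval_mul, eval_C, he]
        ring
    _ = (u - e * v) * (2 * (q.eval 1 - e * q.eval (-1))) +
          (u + e * v) * (2 * (q.eval 1 + e * q.eval (-1))) := by
        rw [gegIntegral_add two_pos (by fun_prop) (by fun_prop), gegIntegral_const_mul,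
          gegIntegral_const_mul,
          gegIntegral_two_mul_derivative_derivative_legendre (hq.trans N.lt_succ_self),
          gegIntegral_two_mul_derivative_derivative_legendre hq, pow_succ]
        ring
    _ = 4 * (u * q.eval 1 + v * q.eval (-1)) := by linear_combination 4 * v * q.eval (-1) * hee

theorem gegIntegral_two_sq_endpointRepresenter_le {N : ℕ} (hN : 1 ≤ N) (u v : ℝ) :
    gegIntegral 2 (fun x ↦ (endpointRepresenter N u v).eval x ^ 2) ≤
      endpointConst (N + 1) * (u ^ 2 + v ^ 2) := by
  set e : ℝ := (-1) ^ N with he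
  have hee : e ^ 2 = 1 := by
    rw [he, pow_right_comm, neg_one_sq, one_pow]
  have hmono := mul_le_mul_of_nonneg_right (endpointConst_le_succ N) (sq_nonneg (u + e * v))
  calc _ = 4 * (u * (endpointRepresenter N u v).eval 1 +
          v * (endpointRepresenter N u v).eval (-1)) := by
        simp only [sq, gegIntegral_two_mul_endpointRepresenter u v
          (natDegree_endpointRepresenter_lt hN u v)]
    _ = (endpointConst (N + 1) * (u - e * v) ^ 2 + endpointConst N * (u + e * v) ^ 2) / 2 := by
        simp only [endpointRepresenter, eval_add, eval_mul, eval_C,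
          eval_one_derivative_derivative_legendre, eval_neg_one_derivative_derivative_legendre,
          pow_succ (-1 : ℝ) N, ← he]
        ring
    _ ≤ (endpointConst (N + 1) * (u - e * v) ^ 2 + endpointConst (N + 1) * (u + e * v) ^ 2) / 2 :=
        by linarith
    _ = endpointConst (N + 1) * (u ^ 2 + v ^ 2) := by
        linear_combination endpointConst (N + 1) * v ^ 2 * hee

theorem endpoint_sq_le {q : ℝ[X]} {n : ℕ} (hq : q.natDegree + 2 ≤ n) :
    16 * (q.eval 1 ^ 2 + q.eval (-1) ^ 2) ≤
      endpointConst n * gegIntegral 2 fun x ↦ q.eval x ^ 2 := by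
  obtain ⟨N, rfl⟩ : ∃ N, n = N + 1 := ⟨n - 1, by omega⟩
  have hN : 1 ≤ N := by omega
  set k := endpointRepresenter N (q.eval 1) (q.eval (-1)) with hk
  set E := q.eval 1 ^ 2 + q.eval (-1) ^ 2 with hE
  have hI := gegIntegral_nonneg 2 fun x ↦ sq_nonneg (q.eval x)
  rcases (show 0 ≤ E by positivity).eq_or_lt with hE0 | hEpos
  · rw [← hE0, mul_zero]
    exact mul_nonneg (endpointConst_nonneg _) hI
  refine le_of_mul_le_mul_right ?_ hEpos
  calc 16 * E * E = gegIntegral 2 (fun x ↦ q.eval x * k.eval x) ^ 2 := by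
        rw [hk, gegIntegral_two_mul_endpointRepresenter _ _ (by omega), hE]
        ring
    _ ≤ gegIntegral 2 (fun x ↦ q.eval x ^ 2) * gegIntegral 2 (fun x ↦ k.eval x ^ 2) :=
        sq_gegIntegral_mul_le two_pos q.continuous k.continuous
    _ ≤ gegIntegral 2 (fun x ↦ q.eval x ^ 2) * (endpointConst (N + 1) * E) :=
        mul_le_mul_of_nonneg_left (gegIntegral_two_sq_endpointRepresenter_le hN _ _) hI
    _ = endpointConst (N + 1) * gegIntegral 2 (fun x ↦ q.eval x ^ 2) * E := by ring

theorem gegIntegral_two_sq_derivative_derivative_legendre {n : ℕ} (hn : 2 ≤ n) :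
    gegIntegral 2 (fun x ↦ (derivative (derivative (legendre n))).eval x ^ 2) =
      endpointConst n / 2 := by
  have hdeg := natDegree_derivative_derivative_legendre_le n
  have hsign : ((-1 : ℝ) ^ n) ^ 2 = 1 := by
    rw [pow_right_comm, neg_one_sq, one_pow]
  simp only [sq (eval _ _)]
  rw [gegIntegral_two_mul_derivative_derivative_legendre (by omega),
    eval_one_derivative_derivative_legendre, eval_neg_one_derivative_derivative_legendre]
  linear_combination endpointConst n / 4 * hsign

/-! ### Families of polynomials of bounded degree -/

theorem gegIntegral_eval_eq_sum {s : ℝ} (hs : 0 < s) {f : ℝ[X]} {m : ℕ} (hf : f.natDegree < m) :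
    gegIntegral s (fun x ↦ f.eval x) =
      ∑ k ∈ Finset.range m, f.coeff k * gegIntegral s fun x ↦ (X ^ k : ℝ[X]).eval x := by
  simp only [gegIntegral, eval_eq_sum_range' hf, Finset.sum_mul, mul_assoc, eval_pow, eval_X]
  rw [intervalIntegral.integral_finsetSum fun k _ ↦
    (intervalIntegrable_mul_one_sub_sq_rpow (by linarith) (continuous_pow k)).const_mul _]
  simp only [intervalIntegral.integral_const_mul]

section Coeff

variable {R E : Type*} [Semiring R] [TopologicalSpace R] [TopologicalSpace E] {f g : E → R[X]}

theorem continuous_coeff_ofFn [DecidableEq R] (n k : ℕ) :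
    Continuous fun v : Fin n → R ↦ (ofFn n v).coeff k := by
  rcases lt_or_ge k n with hk | hk
  · simp only [ofFn_coeff_eq_val_of_lt _ hk]
    fun_prop
  · simp only [ofFn_coeff_eq_zero_of_ge _ hk]
    fun_prop

theorem continuous_coeff_mul [IsTopologicalSemiring R] (hf : ∀ k, Continuous fun v ↦ (f v).coeff k)
    (hg : ∀ k, Continuous fun v ↦ (g v).coeff k) (k : ℕ) :
    Continuous fun v ↦ (f v * g v).coeff k := by
  simp only [coeff_mul]
  fun_prop

theorem continuous_coeff_derivative [ContinuousMul R] (hf : ∀ k, Continuous fun v ↦ (f v).coeff k)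
    (k : ℕ) : Continuous fun v ↦ (derivative (f v)).coeff k := by
  simp only [coeff_derivative]
  fun_prop

end Coeff

section Family

variable {E : Type*} [TopologicalSpace E] {f : E → ℝ[X]} {m : ℕ}

theorem continuous_gegIntegral_eval {s : ℝ} (hs : 0 < s) (hdeg : ∀ v, (f v).natDegree < m)
    (hcoeff : ∀ k, Continuous fun v ↦ (f v).coeff k) :
    Continuous fun v ↦ gegIntegral s fun x ↦ (f v).eval x := by
  simp only [gegIntegral_eval_eq_sum hs (hdeg _)]
  fun_prop

theorem tendsto_mul_gegIntegral_eval_prod (hdeg : ∀ v, (f v).natDegree < m)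
    (hcoeff : ∀ k, Continuous fun v ↦ (f v).coeff k) (v : E) :
    Tendsto (fun z : E × ℝ ↦ z.2 * gegIntegral z.2 fun x ↦ (f z.1).eval x) (𝓝 v ×ˢ 𝓝[>] 0)
      (𝓝 (((f v).eval 1 + (f v).eval (-1)) / 2)) := by
  have hterm : ∀ k ∈ Finset.range m, Tendsto (fun z : E × ℝ ↦ (f z.1).coeff k *
      (z.2 * gegIntegral z.2 fun x ↦ (X ^ k : ℝ[X]).eval x)) (𝓝 v ×ˢ 𝓝[>] 0)
      (𝓝 ((f v).coeff k * ((1 ^ k + (-1) ^ k) / 2))) := fun k _ ↦ by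
    have hk := tendsto_mul_gegIntegral_eval (X ^ k)
    simp only [eval_pow, eval_X] at hk ⊢
    exact (((hcoeff k).tendsto v).comp tendsto_fst).mul (hk.comp tendsto_snd)
  have hsum := tendsto_finsetSum _ hterm
  have hlim : ∑ k ∈ Finset.range m, (f v).coeff k * ((1 ^ k + (-1) ^ k) / 2) =
      ((f v).eval 1 + (f v).eval (-1)) / 2 := by
    simp only [eval_eq_sum_range' (hdeg v), ← Finset.sum_add_distrib, Finset.sum_div]
    exact Finset.sum_congr rfl fun k _ ↦ by ring
  rw [hlim] at hsum
  refine hsum.congr' ?_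
  filter_upwards [tendsto_snd.eventually self_mem_nhdsWithin] with z hz
  rw [gegIntegral_eval_eq_sum hz (hdeg z.1), Finset.mul_sum]
  exact Finset.sum_congr rfl fun k _ ↦ mul_left_comm _ _ _

end Family

/-- Homogeneity reduces a uniform statement on a finite-dimensional space to its compact unit
sphere. -/
theorem eventually_forall_of_eventually_nhds_prod {E α : Type*} [NormedAddCommGroup E]
    [NormedSpace ℝ E] [ProperSpace E] {l : Filter α} {R : α → E → Prop} (hzero : ∀ a, R a 0)
    (hsmul : ∀ a (c : ℝ) v, R a v → R a (c • v))
    (hnear : ∀ v ≠ 0, ∀ᶠ z : E × α in 𝓝 v ×ˢ l, R z.2 z.1) : ∀ᶠ a in l, ∀ v, R a v := by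
  have hsphere := (isCompact_sphere (0 : E) 1).mem_nhdsSet_prod_of_forall fun v hv ↦
    hnear v (ne_zero_of_mem_unit_sphere ⟨v, hv⟩)
  have hswap : ∀ᶠ z : α × E in l ×ˢ 𝓝ˢ (Metric.sphere (0 : E) 1), R z.1 z.2 :=
    eventually_swap_iff.1 hsphere
  filter_upwards [hswap.curry] with a ha v
  rcases eq_or_ne v 0 with rfl | hv
  · exact hzero a
  have hnorm : ‖v‖ ≠ 0 := norm_ne_zero_iff.2 hv
  have hunit : ‖v‖⁻¹ • v ∈ Metric.sphere (0 : E) 1 := by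
    rw [mem_sphere_zero_iff_norm, norm_smul, norm_inv, norm_norm, inv_mul_cancel₀ hnorm]
  simpa [smul_smul, hnorm] using hsmul a ‖v‖ _ (ha.self_of_nhdsSet _ hunit)

/-! ### The Markov inequality for small `s` -/

theorem exists_eq_one_sub_sq_mul {p : ℝ[X]} (hp : p ≠ 0) (h1 : p.eval 1 = 0)
    (hneg1 : p.eval (-1) = 0) :
    ∃ q : ℝ[X], q ≠ 0 ∧ p = (1 - X ^ 2) * q ∧ p.natDegree = q.natDegree + 2 := by
  obtain ⟨r, rfl⟩ := dvd_iff_isRoot.2 h1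
  obtain ⟨q, rfl⟩ := dvd_iff_isRoot.2 (show r.IsRoot (-1) by
    simp only [eval_mul, eval_sub, eval_X, eval_C] at hneg1
    exact (mul_eq_zero.1 hneg1).resolve_left (by norm_num))
  have hq : q ≠ 0 := by
    rintro rfl
    simp at hp
  refine ⟨-q, neg_ne_zero.2 hq, ?_, ?_⟩
  · simp only [map_neg, map_one]
    ring
  · rw [natDegree_mul (X_sub_C_ne_zero 1) (mul_ne_zero (X_sub_C_ne_zero _) hq),
      natDegree_mul (X_sub_C_ne_zero _) hq, natDegree_X_sub_C, natDegree_X_sub_C, natDegree_neg]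
    omega

theorem sq_eval_endpoints_derivative_one_sub_sq_mul {R : Type*} [CommRing R] (q : R[X]) :
    (derivative ((1 - X ^ 2) * q)).eval 1 ^ 2 + (derivative ((1 - X ^ 2) * q)).eval (-1) ^ 2 =
      4 * (q.eval 1 ^ 2 + q.eval (-1) ^ 2) := by
  simp
  ring

theorem tendsto_gegIntegral_sq_atTop {p : ℝ[X]} (hp : ¬ (p.eval 1 = 0 ∧ p.eval (-1) = 0)) :
    Tendsto (fun s ↦ gegIntegral s fun x ↦ p.eval x ^ 2) (𝓝[>] 0) atTop := by
  have hpos : 0 < ((p ^ 2).eval 1 + (p ^ 2).eval (-1)) / 2 := by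
    simp only [eval_pow]
    rcases not_and_or.1 hp with h | h <;> positivity
  refine ((tendsto_mul_gegIntegral_eval (p ^ 2)).pos_mul_atTop hpos
    tendsto_inv_nhdsGT_zero).congr' ?_
  filter_upwards [self_mem_nhdsWithin] with s hs
  simp only [eval_pow]
  rw [mul_comm s, mul_inv_cancel_right₀ (ne_of_gt hs)]

theorem eventually_endpoint_derivative_sq_lt {n : ℕ} {K : ℝ} (hK : endpointConst n < K) {p : ℝ[X]}
    (hp : p ≠ 0) (hdeg : p.natDegree ≤ n) :
    ∀ᶠ s in 𝓝[>] 0, 4 * ((derivative p).eval 1 ^ 2 + (derivative p).eval (-1) ^ 2) <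
      K * gegIntegral s fun x ↦ p.eval x ^ 2 := by
  by_cases hend : p.eval 1 = 0 ∧ p.eval (-1) = 0
  · obtain ⟨q, hq, rfl, hqdeg⟩ := exists_eq_one_sub_sq_mul hp hend.1 hend.2
    refine ((tendsto_gegIntegral_sq_one_sub_sq_mul q).const_mul K).eventually (lt_mem_nhds ?_)
    calc _ = 16 * (q.eval 1 ^ 2 + q.eval (-1) ^ 2) := by
          rw [sq_eval_endpoints_derivative_one_sub_sq_mul]
          ring
      _ ≤ endpointConst n * gegIntegral 2 (fun x ↦ q.eval x ^ 2) := endpoint_sq_le (by omega)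
      _ < K * gegIntegral 2 (fun x ↦ q.eval x ^ 2) :=
          mul_lt_mul_of_pos_right hK (gegIntegral_sq_eval_pos two_pos hq)
  · exact ((tendsto_gegIntegral_sq_atTop hend).const_mul_atTop
      ((endpointConst_nonneg n).trans_lt hK)).eventually_gt_atTop _

theorem eventually_sq_derivative_ofFn_le {n : ℕ} {K : ℝ} (hK : endpointConst n < K)
    {v : Fin (n + 1) → ℝ} (hv : v ≠ 0) :
    ∀ᶠ z : (Fin (n + 1) → ℝ) × ℝ in 𝓝 v ×ˢ 𝓝[>] 0,
      8 * z.2 * gegIntegral z.2 (fun x ↦ (derivative (ofFn (n + 1) z.1)).eval x ^ 2) ≤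
        K * gegIntegral z.2 fun x ↦ (ofFn (n + 1) z.1).eval x ^ 2 := by
  have hcoeff := continuous_coeff_ofFn (R := ℝ) (n + 1)
  have hdeg : ∀ w : Fin (n + 1) → ℝ, (ofFn (n + 1) w).natDegree ≤ n := fun w ↦
    Nat.le_of_lt_succ (ofFn_natDegree_lt (by omega) w)
  have hderivDeg : ∀ w : Fin (n + 1) → ℝ, (derivative (ofFn (n + 1) w)).natDegree ≤ n := fun w ↦
    (natDegree_derivative_le _).trans ((Nat.sub_le _ _).trans (hdeg w))
  have hsqDeg : ∀ {p : ℝ[X]}, p.natDegree ≤ n → (p * p).natDegree < 2 * n + 1 := fun hp ↦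
    natDegree_mul_le.trans_lt (by omega)
  obtain ⟨t, hlt, ht⟩ := ((eventually_endpoint_derivative_sq_lt hK
    ((map_ne_zero_iff _ (injective_ofFn _)).2 hv) (hdeg v)).and self_mem_nhdsWithin).exists
  have hnum := (tendsto_mul_gegIntegral_eval_prod (fun w ↦ hsqDeg (hderivDeg w))
    (continuous_coeff_mul (continuous_coeff_derivative hcoeff)
      (continuous_coeff_derivative hcoeff)) v).const_mul 8
  have hden := (((continuous_gegIntegral_eval ht (fun w ↦ hsqDeg (hdeg w))
    (continuous_coeff_mul hcoeff hcoeff)).tendsto v).comp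
      (tendsto_fst (g := 𝓝[>] (0 : ℝ)))).const_mul K
  simp only [← sq, eval_pow, Function.comp_apply] at hnum hden
  filter_upwards [hnum.eventually_lt hden (by linarith),
    tendsto_snd.eventually (Ioc_mem_nhdsGT ht)] with z hz hzt
  calc _ = 8 * (z.2 * gegIntegral z.2 fun x ↦ (derivative (ofFn (n + 1) z.1)).eval x ^ 2) :=
        mul_assoc _ _ _
    _ ≤ _ := hz.le
    _ ≤ _ := mul_le_mul_of_nonneg_left (gegIntegral_anti hzt.1 hzt.2 (by fun_prop)
        fun x ↦ sq_nonneg _) ((endpointConst_nonneg n).trans hK.le)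

/-- The square of the normalized Markov ratio `2√(2λ+1) ‖p'‖ / ‖p‖` for the Gegenbauer weight with
`λ = s - 1/2`. -/
noncomputable def markovQuotient (s : ℝ) (p : ℝ[X]) : ℝ :=
  8 * s * gegIntegral s (fun x ↦ (derivative p).eval x ^ 2) / gegIntegral s fun x ↦ p.eval x ^ 2

theorem eventually_markovQuotient_le {n : ℕ} {K : ℝ} (hK : endpointConst n < K) :
    ∀ᶠ s in 𝓝[>] 0, ∀ p : ℝ[X], p.natDegree ≤ n → markovQuotient s p ≤ K := by
  have hnonneg (s : ℝ) (p : ℝ[X]) := gegIntegral_nonneg s fun x ↦ sq_nonneg (p.eval x)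
  have hall := eventually_forall_of_eventually_nhds_prod (l := 𝓝[>] (0 : ℝ))
    (R := fun s (v : Fin (n + 1) → ℝ) ↦
      8 * s * gegIntegral s (fun x ↦ (derivative (ofFn (n + 1) v)).eval x ^ 2) ≤
        K * gegIntegral s fun x ↦ (ofFn (n + 1) v).eval x ^ 2)
    (fun s ↦ by simp [gegIntegral]) (fun s c v hv ↦ ?_)
    (fun v ↦ eventually_sq_derivative_ofFn_le hK)
  · filter_upwards [hall] with s hs p hp
    refine div_le_of_le_mul₀ (hnonneg s p) ((endpointConst_nonneg n).trans hK.le) ?_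
    simpa only [ofFn_comp_toFn_eq_id_of_natDegree_lt (Nat.lt_succ_of_le hp)] using
      hs (toFn (n + 1) p)
  · simp only [map_smul, eval_smul, smul_eq_mul, mul_pow, gegIntegral_const_mul]
    linarith [mul_le_mul_of_nonneg_left hv (sq_nonneg c)]

theorem tendsto_markovQuotient {n : ℕ} (hn : 2 ≤ n) :
    Tendsto (fun s ↦ markovQuotient s ((1 - X ^ 2) * derivative (derivative (legendre n))))
      (𝓝[>] 0) (𝓝 (endpointConst n)) := by
  set q := derivative (derivative (legendre n)) with hq
  have hpos := endpointConst_pos hn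
  have hsign : ((-1 : ℝ) ^ n) ^ 2 = 1 := by
    rw [pow_right_comm, neg_one_sq, one_pow]
  have hden := tendsto_gegIntegral_sq_one_sub_sq_mul q
  rw [gegIntegral_two_sq_derivative_derivative_legendre hn] at hden
  have hnum := (tendsto_mul_gegIntegral_eval (derivative ((1 - X ^ 2) * q) ^ 2)).const_mul 8
  simp only [eval_pow, sq_eval_endpoints_derivative_one_sub_sq_mul] at hnum
  have hlim : 8 * (4 * (q.eval 1 ^ 2 + q.eval (-1) ^ 2) / 2) / (endpointConst n / 2) =
      endpointConst n := by
    rw [hq, eval_one_derivative_derivative_legendre, eval_neg_one_derivative_derivative_legendre,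
      mul_pow, hsign]
    field_simp
    norm_num
  simpa only [markovQuotient, mul_assoc, hlim, Pi.div_def] using hnum.div hden (half_pos hpos).ne'

/-! ### Passing to the Markov constant -/

theorem gegNorm_eq_sqrt (lam : ℝ) (f : ℝ → ℝ) :
    gegNorm lam f = √(gegIntegral (lam + 1 / 2) fun x ↦ f x ^ 2) := by
  rw [gegNorm, gegIntegral, Real.sqrt_eq_rpow, show lam + 1 / 2 - 1 = lam - 1 / 2 by ring]

theorem two_mul_sqrt_mul_gegNorm_div {lam : ℝ} (hlam : -(1 / 2) < lam) (p : ℝ[X]) :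
    2 * √(2 * lam + 1) *
        (gegNorm lam (fun x ↦ (derivative p).eval x) / gegNorm lam fun x ↦ p.eval x) =
      √(markovQuotient (lam + 1 / 2) p) := by
  have hnonneg := gegIntegral_nonneg (lam + 1 / 2) fun x ↦ sq_nonneg ((derivative p).eval x)
  rw [markovQuotient, Real.sqrt_div (by nlinarith), Real.sqrt_mul (by linarith),
    show 8 * (lam + 1 / 2) = 2 ^ 2 * (2 * lam + 1) by ring, Real.sqrt_mul (by norm_num),
    Real.sqrt_sq zero_le_two, gegNorm_eq_sqrt, gegNorm_eq_sqrt, mul_div_assoc]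

section MarkovConst

variable {lam : ℝ} {n : ℕ} {K : ℝ}

theorem gegNorm_div_le (hlam : -(1 / 2) < lam) {p : ℝ[X]}
    (hp : markovQuotient (lam + 1 / 2) p ≤ K) :
    gegNorm lam (fun x ↦ (derivative p).eval x) / gegNorm lam (fun x ↦ p.eval x) ≤
      √K / (2 * √(2 * lam + 1)) := by
  have hscale : 0 < 2 * √(2 * lam + 1) := mul_pos two_pos (Real.sqrt_pos.2 (by linarith))
  rw [le_div_iff₀' hscale, two_mul_sqrt_mul_gegNorm_div hlam]
  exact Real.sqrt_le_sqrt hp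

theorem two_mul_sqrt_mul_markovConst_le (hlam : -(1 / 2) < lam)
    (hK : ∀ p : ℝ[X], p.natDegree ≤ n → markovQuotient (lam + 1 / 2) p ≤ K) :
    2 * √(2 * lam + 1) * markovConst lam n ≤ √K := by
  have hscale : 0 < 2 * √(2 * lam + 1) := mul_pos two_pos (Real.sqrt_pos.2 (by linarith))
  rw [← le_div_iff₀' hscale]
  refine Real.sSup_le ?_ (by positivity)
  rintro r ⟨p, -, hp, rfl⟩
  exact gegNorm_div_le hlam (hK p hp)

theorem sqrt_markovQuotient_le (hlam : -(1 / 2) < lam)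
    (hK : ∀ p : ℝ[X], p.natDegree ≤ n → markovQuotient (lam + 1 / 2) p ≤ K) {p : ℝ[X]}
    (hp : p ≠ 0) (hdeg : p.natDegree ≤ n) :
    √(markovQuotient (lam + 1 / 2) p) ≤ 2 * √(2 * lam + 1) * markovConst lam n := by
  rw [← two_mul_sqrt_mul_gegNorm_div hlam]
  refine mul_le_mul_of_nonneg_left (le_csSup ⟨√K / (2 * √(2 * lam + 1)), ?_⟩ ⟨p, hp, hdeg, rfl⟩)
    (by positivity)
  rintro r ⟨p', -, hp', rfl⟩
  exact gegNorm_div_le hlam (hK p' hp')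

end MarkovConst

theorem markovConst_nonneg (lam : ℝ) (n : ℕ) : 0 ≤ markovConst lam n := by
  refine Real.sSup_nonneg ?_
  rintro r ⟨p, -, -, rfl⟩
  simp only [gegNorm_eq_sqrt]
  positivity

theorem tendsto_add_half_nhdsGT :
    Tendsto (fun lam : ℝ ↦ lam + 1 / 2) (𝓝[>] (-(1 / 2))) (𝓝[>] 0) := by
  refine tendsto_nhdsWithin_iff.2 ⟨?_, ?_⟩
  · have hcont := (continuous_add_const (1 / 2 : ℝ)).tendsto (-(1 / 2))
    rw [neg_add_cancel] at hcont
    exact hcont.mono_left nhdsWithin_le_nhds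
  · filter_upwards [self_mem_nhdsWithin] with lam hlam
    exact neg_lt_iff_pos_add.1 (Set.mem_Ioi.1 hlam)

theorem eventually_two_mul_sqrt_mul_markovConst_lt {n : ℕ} {b : ℝ} (hb : √(endpointConst n) < b) :
    ∀ᶠ lam in 𝓝[>] (-(1 / 2)), 2 * √(2 * lam + 1) * markovConst lam n < b := by
  have hb0 : 0 < b := (Real.sqrt_nonneg _).trans_lt hb
  obtain ⟨K, hK, hKb⟩ := exists_between ((Real.sqrt_lt' hb0).1 hb)
  filter_upwards [tendsto_add_half_nhdsGT.eventually (eventually_markovQuotient_le hK),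
    self_mem_nhdsWithin] with lam hquot hlam
  exact (two_mul_sqrt_mul_markovConst_le hlam hquot).trans_lt ((Real.sqrt_lt' hb0).2 hKb)

theorem eventually_lt_two_mul_sqrt_mul_markovConst {n : ℕ} {a : ℝ} (ha : a < √(endpointConst n)) :
    ∀ᶠ lam in 𝓝[>] (-(1 / 2)), a < 2 * √(2 * lam + 1) * markovConst lam n := by
  rcases lt_or_ge n 2 with hn | hn
  · have hzero : endpointConst n = 0 := by interval_cases n <;> simp [endpointConst]
    rw [hzero, Real.sqrt_zero] at ha
    filter_upwards with lam
    exact ha.trans_le (mul_nonneg (by positivity) (markovConst_nonneg lam n))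
  set q := derivative (derivative (legendre n))
  have hdeg : ((1 - X ^ 2) * q).natDegree ≤ n := by
    have hquad : (1 - X ^ 2 : ℝ[X]).natDegree ≤ 2 := by compute_degree
    have hqdeg : q.natDegree ≤ _ := natDegree_derivative_derivative_legendre_le n
    exact natDegree_mul_le.trans (by omega)
  have hlim := tendsto_markovQuotient hn
  have hne : (1 - X ^ 2) * q ≠ 0 := by
    refine mul_ne_zero (fun hzero ↦ ?_) (derivative_derivative_legendre_ne_zero hn)
    simpa using congrArg (eval 0) hzero
  filter_upwards [tendsto_add_half_nhdsGT.eventually (hlim.sqrt.eventually (lt_mem_nhds ha)),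
    tendsto_add_half_nhdsGT.eventually (eventually_markovQuotient_le (lt_add_one _)),
    self_mem_nhdsWithin] with lam hlt hquot hlam
  exact hlt.trans_le (sqrt_markovQuotient_le hlam hquot hne hdeg)

theorem sqrt_endpointConst_mem_Icc {n : ℕ} (hn : 1 ≤ n) :
    √(endpointConst n) ∈ Set.Icc (((n : ℝ) - 1 / 2) * (n - 1)) ((n + 3 / 2) ^ 2) := by
  have hn1 : (1 : ℝ) ≤ n := Nat.one_le_cast.2 hn
  constructor
  · apply Real.le_sqrt_of_sq_le
    have hdiff : 0 ≤ (n - 1 : ℝ) * (20 * n ^ 2 + 3 * n + 1) :=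
      mul_nonneg (sub_nonneg.2 hn1) (by positivity)
    rw [endpointConst]
    linarith
  · apply (Real.sqrt_le_left (by positivity)).2
    rw [endpointConst]
    nlinarith

theorem markov_asymptotics_lambda_to_neg_half_general (n : ℕ) :
    Tendsto (fun lam : ℝ ↦ 2 * √(2 * lam + 1) * markovConst lam n) (𝓝[>] (-(1 / 2)))
      (𝓝 √(((n : ℝ) - 1) * n * (n + 1) * (n + 2))) :=
  tendsto_order.2 ⟨fun _ ↦ eventually_lt_two_mul_sqrt_mul_markovConst,
    fun _ ↦ eventually_two_mul_sqrt_mul_markovConst_lt⟩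

theorem markov_asymptotics_lambda_to_neg_half (n : ℕ) (hn : 3 ≤ n) :
    ((n : ℝ) - 1/2) * ((n : ℝ) - 1) ≤
      Filter.liminf (fun lam : ℝ => 2 * Real.sqrt (2*lam + 1) * markovConst lam n)
        (nhdsWithin (-(1/2 : ℝ)) (Set.Ioi (-(1/2 : ℝ)))) ∧
    Filter.limsup (fun lam : ℝ => 2 * Real.sqrt (2*lam + 1) * markovConst lam n)
        (nhdsWithin (-(1/2 : ℝ)) (Set.Ioi (-(1/2 : ℝ)))) ≤
      ((n : ℝ) + 3/2)^2 := by
  have hlim := markov_asymptotics_lambda_to_neg_half_general n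
  rw [hlim.liminf_eq, hlim.limsup_eq]
  exact sqrt_endpointConst_mem_Icc (by omega)
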